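/- Let (X,{T^t}_{t∈ℝ}) be a minimal ℝ-flow. Then there exists a countable set E ⊆ ℝ such that for each t ∈ ℝ∖E the discrete system (X,T^t) is minimal. -/

import Mathlib

/-!
A proper minimal set `M` of the time-`t` map is a block for the whole flow, because the flow
commutes with its time-`t` map. By minimality of the flow, the closed group of times fixing `M` is
not `ℝ`, hence is `aℤ` for some `a`, and it contains `t`. If `t ≠ 0`, then `a ≠ 0`, the translates
`s +ᵥ M` with `s` in one period cover the space, and sending `s +ᵥ M` to `s` modulo `aℤ` is a
continuous eigenfunction of frequency `1 / a`. Eigenfunctions of distinct frequencies are at uniform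
distance `2`, so in the separable space of continuous circle-valued functions only countably many
frequencies occur, and `t` is an integer multiple of the inverse of one of them.
-/

open AddAction Set TopologicalSpace
open scoped Pointwise FourierTransform

section MinimalSets

variable {X : Type*} [TopologicalSpace X]

/-- Minimal sets of an action: minimal elements among the nonempty closed invariant sets. -/
def IsMinimalSet (G : Type*) [AddMonoid G] [AddAction G X] (M : Set X) : Prop :=
  Minimal (fun N : Set X ↦ IsClosed N ∧ N.Nonempty ∧ ∀ g : G, g +ᵥ N ⊆ N) M

namespace IsMinimalSet

section AddMonoid

variable {G : Type*} [AddMonoid G] [AddAction G X] {M : Set X}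

theorem isClosed (hM : IsMinimalSet G M) : IsClosed M := hM.prop.1

theorem nonempty (hM : IsMinimalSet G M) : M.Nonempty := hM.prop.2.1

theorem vadd_subset (hM : IsMinimalSet G M) (g : G) : g +ᵥ M ⊆ M := hM.prop.2.2 g

theorem exists_subset [CompactSpace X] {N : Set X} (hclosed : IsClosed N) (hne : N.Nonempty)
    (hinv : ∀ g : G, g +ᵥ N ⊆ N) : ∃ M ⊆ N, IsMinimalSet G M := by
  refine zorn_superset_nonempty _ (fun c hc hchain hcne ↦ ?_) N ⟨hclosed, hne, hinv⟩
  have : Nonempty c := hcne.to_subtype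
  have hdir : DirectedOn (· ⊇ ·) c := IsChain.directedOn hchain.symm
  have hne_sInter : (⋂₀ c).Nonempty :=
    IsCompact.nonempty_sInter_of_directed_nonempty_isCompact_isClosed hdir
      (fun N hN ↦ (hc hN).2.1) (fun N hN ↦ (hc hN).1.isCompact) (fun N hN ↦ (hc hN).1)
  refine ⟨⋂₀ c, ⟨isClosed_sInter fun N hN ↦ (hc hN).1, hne_sInter, fun g ↦ ?_⟩,
    fun N hN ↦ sInter_subset_of_mem hN⟩
  exact subset_sInter fun N hN ↦ (vadd_set_mono (sInter_subset_of_mem hN)).trans ((hc hN).2.2 g)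

theorem exists_ne_univ [CompactSpace X] [ContinuousConstVAdd G X] (h : ¬ IsMinimal G X) :
    ∃ M : Set X, IsMinimalSet G M ∧ M ≠ univ := by
  rw [isMinimal_iff_isClosed_vadd_invariant] at h
  push Not at h
  obtain ⟨N, hclosed, hinv, hne, hproper⟩ := h
  obtain ⟨M, hMN, hM⟩ := exists_subset hclosed hne hinv
  exact ⟨M, hM, fun hMuniv ↦ hproper (univ_subset_iff.1 (hMuniv ▸ hMN))⟩

theorem vadd_subset_of_mem {H : Type*} [VAdd H X] [ContinuousConstVAdd H X]
    [VAddCommClass H G X] (hM : IsMinimalSet G M) {h : H} {x : X} (hx : x ∈ M)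
    (hhx : h +ᵥ x ∈ M) : h +ᵥ M ⊆ M := by
  have hreturn : IsClosed (M ∩ (h +ᵥ ·) ⁻¹' M) ∧ (M ∩ (h +ᵥ ·) ⁻¹' M).Nonempty ∧
      ∀ g : G, g +ᵥ (M ∩ (h +ᵥ ·) ⁻¹' M) ⊆ M ∩ (h +ᵥ ·) ⁻¹' M := by
    refine ⟨hM.isClosed.inter (hM.isClosed.preimage (continuous_const_vadd h)), ⟨x, hx, hhx⟩, ?_⟩
    rintro g _ ⟨y, ⟨hy, hhy⟩, rfl⟩
    refine ⟨hM.vadd_subset g (vadd_mem_vadd_set hy), ?_⟩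
    simpa only [mem_preimage, vadd_comm h g y] using hM.vadd_subset g (vadd_mem_vadd_set hhy)
  have hsub : M ⊆ M ∩ (h +ᵥ ·) ⁻¹' M := hM.le_of_le hreturn inter_subset_left
  exact image_subset_iff.2 fun y hy ↦ (hsub hy).2

theorem isBlock {H : Type*} [AddGroup H] [AddAction H X] [ContinuousConstVAdd H X]
    [VAddCommClass H G X] (hM : IsMinimalSet G M) : IsBlock H M := by
  refine isBlock_iff_vadd_eq_of_mem.2 fun h x hx hhx ↦
    (hM.vadd_subset_of_mem hx hhx).antisymm (subset_vadd_set_iff.2 ?_)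
  exact hM.vadd_subset_of_mem hhx (by rwa [neg_vadd_vadd])

end AddMonoid

theorem le_stabilizer {G : Type*} [AddGroup G] [AddAction G X] {K : AddSubgroup G} {M : Set X}
    (hM : IsMinimalSet K M) : K ≤ stabilizer G M := fun k hk ↦
  mem_stabilizer_iff.2 (isInvariantBlock_iff_isFixedBlock.1 hM.vadd_subset ⟨k, hk⟩)

end IsMinimalSet

end MinimalSets

section Stabilizers

variable {G X : Type*} [AddGroup G] [AddAction G X] [TopologicalSpace X] {M : Set X}

theorem isClosed_stabilizer [TopologicalSpace G] [ContinuousNeg G] [ContinuousVAdd G X]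
    (hM : IsClosed M) : IsClosed (stabilizer G M : Set G) := by
  have hreturn (x : X) : IsClosed {g : G | g +ᵥ x ∈ M} :=
    hM.preimage (continuous_id.vadd continuous_const)
  have hstab : (stabilizer G M : Set G) =
      ⋂ x ∈ M, {g : G | g +ᵥ x ∈ M} ∩ Neg.neg ⁻¹' {g : G | g +ᵥ x ∈ M} := by
    ext g
    simp only [SetLike.mem_coe, mem_stabilizer_iff, subset_antisymm_iff, subset_vadd_set_iff,
      mem_iInter₂, mem_inter_iff, mem_preimage, mem_ofPred_eq, forall_and]
    exact and_congr image_subset_iff image_subset_iff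
  rw [hstab]
  exact isClosed_biInter fun x _ ↦ (hreturn x).inter ((hreturn x).preimage continuous_neg)

theorem stabilizer_ne_top [IsMinimal G X] (hM : IsClosed M) (hne : M.Nonempty)
    (hproper : M ≠ univ) : stabilizer G M ≠ ⊤ := fun htop ↦ by
  have hinv (g : G) : g +ᵥ M ⊆ M := (mem_stabilizer_iff.1 (htop ▸ AddSubgroup.mem_top g)).subset
  exact (eq_empty_or_univ_of_vadd_invariant_closed G hM hinv).elim hne.ne_empty hproper

theorem vadd_eq_univ_of_add_stabilizer_eq_univ [TopologicalSpace G] [ContinuousNeg G]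
    [ContinuousVAdd G X] [IsMinimal G X] (hM : IsClosed M) (hne : M.Nonempty) {K : Set G}
    (hK : IsCompact K) (hcocompact : K + (stabilizer G M : Set G) = univ) : K +ᵥ M = univ := by
  have hinv (g : G) : g +ᵥ (K +ᵥ M) ⊆ K +ᵥ M := by
    rintro _ ⟨_, ⟨k, -, m, hm, rfl⟩, rfl⟩
    obtain ⟨k', hk', h, hh, hsplit⟩ : g + k ∈ K + (stabilizer G M : Set G) :=
      hcocompact ▸ mem_univ _
    refine ⟨k', hk', h +ᵥ m, (mem_stabilizer_iff.1 hh).subset (vadd_mem_vadd_set hm), ?_⟩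
    simp only [← add_vadd] at hsplit ⊢
    rw [hsplit]
  have hKne : K.Nonempty := (hcocompact ▸ univ_nonempty : (K + _).Nonempty).of_add_left
  exact (eq_empty_or_univ_of_vadd_invariant_closed G (hM.vadd_left_of_isCompact hK)
    hinv).resolve_left (hKne.vadd hne).ne_empty

end Stabilizers

section EquivariantMaps

variable {G X H : Type*} [AddGroup G] [AddAction G X] [Monoid H] {M : Set X}

theorem addChar_eq_of_mem_vadd_of_isBlock (hblock : IsBlock G M) {χ : AddChar G H}
    (hχ : ∀ g ∈ stabilizer G M, χ g = 1) {g g' : G} {x : X} (hx : x ∈ g +ᵥ M)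
    (hx' : x ∈ g' +ᵥ M) : χ g = χ g' := by
  have htranslate : g +ᵥ M = g' +ᵥ M :=
    isBlock_iff_vadd_eq_vadd_of_nonempty.1 hblock ⟨x, hx, hx'⟩
  have hstab : -g + g' ∈ stabilizer G M := by
    rw [mem_stabilizer_iff, add_vadd, ← htranslate, neg_vadd_vadd]
  calc
    χ g = χ g * χ (-g + g') := by rw [hχ _ hstab, mul_one]
    _ = χ g' := by rw [← AddChar.map_add_eq_mul, add_neg_cancel_left]

theorem exists_equivariant_continuousMap_of_isBlock [TopologicalSpace X] [TopologicalSpace G]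
    [ContinuousNeg G] [ContinuousVAdd G X] [TopologicalSpace H] (hM : IsClosed M)
    (hblock : IsBlock G M) {K : Set G} (hK : IsCompact K) (hKM : K +ᵥ M = univ)
    {χ : AddChar G H} (hχcont : Continuous χ) (hχ : ∀ g ∈ stabilizer G M, χ g = 1) :
    ∃ f : C(X, H), ∀ g x, f (g +ᵥ x) = χ g * f x := by
  have hcover (x : X) : ∃ k ∈ K, x ∈ k +ᵥ M := by
    obtain ⟨k, hk, m, hm, rfl⟩ : x ∈ K +ᵥ M := hKM ▸ mem_univ x
    exact ⟨k, hk, vadd_mem_vadd_set hm⟩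
  choose σ hσK hσ using hcover
  have hconst {g : G} {x : X} (hx : x ∈ g +ᵥ M) : χ (σ x) = χ g :=
    addChar_eq_of_mem_vadd_of_isBlock hblock hχ (hσ x) hx
  have hpreimage (C : Set H) : (fun x ↦ χ (σ x)) ⁻¹' C = (K ∩ χ ⁻¹' C) +ᵥ M := by
    ext x
    constructor
    · intro hx
      obtain ⟨m, hm, hmx⟩ := hσ x
      exact ⟨σ x, ⟨hσK x, hx⟩, m, hm, hmx⟩
    · rintro ⟨k, ⟨-, hkC⟩, m, hm, rfl⟩
      rwa [mem_preimage, hconst (vadd_mem_vadd_set hm)]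
  have hcont : Continuous fun x ↦ χ (σ x) := continuous_iff_isClosed.2 fun C hC ↦ by
    rw [hpreimage]
    exact hM.vadd_left_of_isCompact (hK.inter_right (hC.preimage hχcont))
  refine ⟨⟨_, hcont⟩, fun g x ↦ (?_ : χ (σ (g +ᵥ x)) = χ g * χ (σ x))⟩
  rw [← AddChar.map_add_eq_mul]
  refine hconst ?_
  rw [add_vadd]
  exact vadd_mem_vadd_set (hσ x)

end EquivariantMaps

section Archimedean

variable {G : Type*} [AddCommGroup G] [LinearOrder G] [IsOrderedAddMonoid G] [Archimedean G]

theorem Icc_add_zmultiples_eq_univ {a : G} (ha : 0 < a) :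
    Icc 0 a + (AddSubgroup.zmultiples a : Set G) = univ := by
  refine eq_univ_of_forall fun g ↦ ⟨g - toIcoDiv ha 0 g • a, ?_, toIcoDiv ha 0 g • a,
    AddSubgroup.zsmul_mem_zmultiples a _, sub_add_cancel _ _⟩
  have hmem := sub_toIcoDiv_zsmul_mem_Ico ha 0 g
  rw [zero_add] at hmem
  exact Ico_subset_Icc_self hmem

theorem exists_nonneg_stabilizer_eq_zmultiples [TopologicalSpace G] [OrderTopology G]
    {X : Type*} [TopologicalSpace X] [AddAction G X] [ContinuousVAdd G X] [IsMinimal G X]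
    {M : Set X} (hM : IsClosed M) (hne : M.Nonempty) (hproper : M ≠ univ) :
    ∃ a : G, 0 ≤ a ∧ stabilizer G M = AddSubgroup.zmultiples a := by
  have hnot_dense : ¬ Dense (stabilizer G M : Set G) := fun hdense ↦ by
    have huniv : (stabilizer G M : Set G) = univ :=
      (isClosed_stabilizer (G := G) hM).closure_eq ▸ hdense.closure_eq
    exact stabilizer_ne_top hM hne hproper (SetLike.coe_injective huniv)
  obtain ⟨a, ha⟩ := (AddSubgroup.dense_or_cyclic _).resolve_left hnot_dense
  exact ⟨|a|, abs_nonneg a, by rw [ha, zmultiples_abs, AddSubgroup.zmultiples_eq_closure]⟩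

end Archimedean

section Eigenfunctions

variable {X : Type*} [TopologicalSpace X] [AddAction ℝ X]

/-- Continuous eigenfunctions of an `ℝ`-action, normalized to have modulus one. The frequency `ω`
corresponds to the eigenvalue `2πω`, since `𝐞 s = exp (2πis)`. -/
def IsEigenfunction (f : C(X, Circle)) (ω : ℝ) : Prop :=
  ∀ (s : ℝ) (x : X), f (s +ᵥ x) = 𝐞 (ω * s) * f x

variable (X) in
/-- The frequencies of the continuous eigenfunctions of an `ℝ`-action: its continuous point
spectrum, up to the factor `2π`. -/
def eigenfrequencies : Set ℝ := {ω | ∃ f : C(X, Circle), IsEigenfunction f ω}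

namespace IsEigenfunction

variable {f f' : C(X, Circle)} {ω ω' : ℝ}

theorem div (hf : IsEigenfunction f ω) (hf' : IsEigenfunction f' ω') :
    IsEigenfunction (f / f') (ω - ω') := fun s x ↦ by
  rw [ContinuousMap.div_apply, ContinuousMap.div_apply, hf, hf', sub_mul,
    AddChar.map_sub_eq_div, mul_div_mul_comm]

theorem surjective [Nonempty X] (hf : IsEigenfunction f ω) (hω : ω ≠ 0) :
    Function.Surjective f := fun z ↦ by
  obtain ⟨x⟩ := ‹Nonempty X›
  obtain ⟨θ, hθ⟩ := Circle.exp_surjective (z / f x)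
  have harg : 2 * Real.pi * (ω * (θ / (2 * Real.pi * ω))) = θ := by field_simp
  refine ⟨(θ / (2 * Real.pi * ω)) +ᵥ x, ?_⟩
  rw [hf, Real.fourierChar_apply', harg, hθ, div_mul_cancel]

theorem two_le_dist [CompactSpace X] [Nonempty X] (hf : IsEigenfunction f ω)
    (hf' : IsEigenfunction f' ω') (hω : ω ≠ ω') : 2 ≤ dist f f' := by
  obtain ⟨x, hx⟩ := (hf.div hf').surjective (sub_ne_zero.2 hω) (-1)
  have hopposite : f x = -f' x := by
    rw [ContinuousMap.div_apply, div_eq_iff_eq_mul] at hx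
    rw [hx, neg_one_mul]
  calc
    (2 : ℝ) = ‖-(2 * (f' x : ℂ))‖ := by rw [norm_neg, norm_mul, Circle.norm_coe]; norm_num
    _ = dist (f x : ℂ) (f' x) := by rw [dist_eq_norm, hopposite, Circle.coe_neg]; congr 1; ring
    _ = dist (f x) (f' x) := rfl
    _ ≤ dist f f' := ContinuousMap.dist_apply_le_dist x

end IsEigenfunction

theorem countable_eigenfrequencies [CompactSpace X] [Nonempty X]
    [SeparableSpace C(X, Circle)] : (eigenfrequencies X).Countable := by
  choose! f hf using fun (ω : ℝ) (hω : ω ∈ eigenfrequencies X) ↦ hω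
  have hdisjoint : (eigenfrequencies X).PairwiseDisjoint fun ω ↦ Metric.ball (f ω) 1 := by
    intro ω hω ω' hω' hne
    refine Metric.ball_disjoint_ball ?_
    rw [one_add_one_eq_two]
    exact (hf ω hω).two_le_dist (hf ω' hω') hne
  exact hdisjoint.countable_of_isOpen (fun _ _ ↦ Metric.isOpen_ball)
    fun ω _ ↦ Metric.nonempty_ball.2 one_pos

theorem inv_mem_eigenfrequencies_of_isBlock [ContinuousVAdd ℝ X] [IsMinimal ℝ X] {M : Set X}
    (hM : IsClosed M) (hne : M.Nonempty) (hblock : IsBlock ℝ M) {a : ℝ} (ha : 0 < a)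
    (hstab : stabilizer ℝ M = AddSubgroup.zmultiples a) : a⁻¹ ∈ eigenfrequencies X := by
  have hcover : Icc 0 a +ᵥ M = univ :=
    vadd_eq_univ_of_add_stabilizer_eq_univ hM hne isCompact_Icc
      (by rw [hstab, Icc_add_zmultiples_eq_univ ha])
  have hχcont : Continuous (AddChar.mulShift 𝐞 a⁻¹) :=
    Real.continuous_fourierChar.comp (continuous_const_mul a⁻¹)
  have hχ : ∀ s ∈ stabilizer ℝ M, AddChar.mulShift 𝐞 a⁻¹ s = 1 := by
    rw [hstab]
    rintro _ ⟨n, rfl⟩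
    have hperiod : a⁻¹ * (n • a) = n := by rw [zsmul_eq_mul]; field_simp
    rw [AddChar.mulShift_apply, hperiod, Real.fourierChar_apply', Circle.exp_two_pi_mul_int]
  exact exists_equivariant_continuousMap_of_isBlock hM hblock isCompact_Icc hcover hχcont hχ

theorem exists_eigenfrequency_of_not_isMinimal [CompactSpace X] [ContinuousVAdd ℝ X]
    [IsMinimal ℝ X] {K : AddSubgroup ℝ} (hK : K ≠ ⊥) (hnot : ¬ IsMinimal K X) :
    ∃ ω ∈ eigenfrequencies X, ∀ t ∈ K, ∃ n : ℤ, t = n / ω := by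
  obtain ⟨M, hM, hproper⟩ := IsMinimalSet.exists_ne_univ hnot
  obtain ⟨a, ha_nonneg, hstab⟩ :=
    exists_nonneg_stabilizer_eq_zmultiples (G := ℝ) hM.isClosed hM.nonempty hproper
  have hKa : K ≤ AddSubgroup.zmultiples a := hstab ▸ hM.le_stabilizer
  have ha : a ≠ 0 := by
    rintro rfl
    exact hK (le_bot_iff.1 (AddSubgroup.zmultiples_zero_eq_bot (G := ℝ) ▸ hKa))
  refine ⟨a⁻¹, inv_mem_eigenfrequencies_of_isBlock hM.isClosed hM.nonempty hM.isBlock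
    (ha_nonneg.lt_of_ne' ha) hstab, fun t ht ↦ ?_⟩
  obtain ⟨n, hn⟩ := AddSubgroup.mem_zmultiples_iff.1 (hKa ht)
  exact ⟨n, by rw [← hn, zsmul_eq_mul, div_inv_eq_mul]⟩

end Eigenfunctions

theorem time_t_minimal_off_countable_set_general (X : Type*) [TopologicalSpace X]
    [CompactSpace X] [LocallyCompactSpace X] [SecondCountableTopology X] [AddAction ℝ X]
    [ContinuousVAdd ℝ X] [IsMinimal ℝ X] :
    ∃ E : Set ℝ, E.Countable ∧ ∀ t ∉ E, IsMinimal (AddSubgroup.zmultiples t) X := by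
  cases isEmpty_or_nonempty X
  · exact ⟨∅, countable_empty, fun _ _ ↦ ⟨isEmptyElim⟩⟩
  refine ⟨insert 0 (image2 (fun ω (n : ℤ) ↦ n / ω) (eigenfrequencies X) univ),
    (countable_eigenfrequencies.image2 countable_univ _).insert 0, fun t ht ↦ ?_⟩
  by_contra hnot
  obtain ⟨ht_zero, ht_image⟩ := not_or.1 ht
  obtain ⟨ω, hω, hmultiples⟩ :=
    exists_eigenfrequency_of_not_isMinimal (mt AddSubgroup.zmultiples_eq_bot.1 ht_zero) hnot
  obtain ⟨n, hn⟩ := hmultiples t (AddSubgroup.mem_zmultiples t)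
  exact ht_image ⟨ω, hω, n, mem_univ n, hn.symm⟩

/-- If `(X,{T^t})` is a minimal `ℝ`-flow, then there is a countable set `E ⊆ ℝ`
such that for each `t ∉ E` the discrete system `(X,T^t)` is minimal. -/
theorem time_t_minimal_off_countable_set
    {X : Type*} [MetricSpace X] [CompactSpace X]
    (φ : ℝ → X → X)
    (hφcont : Continuous fun p : ℝ × X => φ p.1 p.2)
    (hφ0 : ∀ x, φ 0 x = x) (hφadd : ∀ s t x, φ (s + t) x = φ s (φ t x))
    (hXmin : ∀ x : X, Dense (Set.range fun t : ℝ => φ t x)) :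
    ∃ E : Set ℝ, E.Countable ∧ ∀ t ∉ E,
      ∀ x : X, Dense (Set.range fun n : ℤ => φ (n * t) x) := by
  let _ : AddAction ℝ X := { vadd := φ, zero_vadd := hφ0, add_vadd := hφadd }
  have : ContinuousVAdd ℝ X := ⟨hφcont⟩
  have : IsMinimal ℝ X := ⟨hXmin⟩
  obtain ⟨E, hE, hmin⟩ := time_t_minimal_off_countable_set_general X
  refine ⟨E, hE, fun t ht x ↦ ((hmin t ht).dense_orbit x).mono ?_⟩
  rintro _ ⟨⟨_, n, rfl⟩, rfl⟩
  exact ⟨n, congrArg (φ · x) (zsmul_eq_mul t n).symm⟩
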